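/- Let d ≥ 3 be an integer, σ > 0, and let α be a Borel probability measure on ℝ^d with topological support 𝓜. Then for every y ∈ ℝ^d ∖ 𝓜: (i) h(y) < ∞; (ii) h is differentiable at y with gradient ∇h(y) = ∫ ∇_y G_{σ²}(x,y) α(dx), where ∇_y G_{σ²}(x,y) = (1/σ²) ∫₀^∞ e^{−t/σ²} (2πt)^{−d/2} e^{−|x−y|²/(2t)} · ((x−y)/t) dt; and (iii) ∇ log h(y) = (1/h(y)) ∫ ∇_y log G_{σ²}(x,y) · G_{σ²}(x,y) α(dx), i.e. the backward drift b(y) = ∇ log h(y) equals the mean of ∇_y log G_{σ²}(x,y) under the posterior measure (1/h(y)) G_{σ²}(x,y) α(dx). -/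

import Mathlib

open MeasureTheory Real

/-- The resolvent (Green) kernel of `d`-dimensional Brownian motion killed at an
independent exponential time with parameter `1/σ²`. -/
noncomputable def greenKernel (d : ℕ) (σ : ℝ) (x y : EuclideanSpace ℝ (Fin d)) : ℝ :=
  (1 / σ ^ 2) * ∫ t in Set.Ioi (0 : ℝ),
    Real.exp (-t / σ ^ 2) * (2 * Real.pi * t) ^ (-(d : ℝ) / 2) *
      Real.exp (-‖x - y‖ ^ 2 / (2 * t))

/-- The gradient in `y` of the Green kernel `G_{σ²}(x, ·)`:
`∇_y G_{σ²}(x,y) = (1/σ²) ∫₀^∞ e^{−t/σ²} (2πt)^{−d/2} e^{−|x−y|²/(2t)} (x−y)/t dt`. -/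
noncomputable def greenKernelGrad (d : ℕ) (σ : ℝ) (x y : EuclideanSpace ℝ (Fin d)) :
    EuclideanSpace ℝ (Fin d) :=
  (1 / σ ^ 2) • ∫ t in Set.Ioi (0 : ℝ),
    (Real.exp (-t / σ ^ 2) * (2 * Real.pi * t) ^ (-(d : ℝ) / 2) *
      Real.exp (-‖x - y‖ ^ 2 / (2 * t)) * t⁻¹) • (x - y)

/-- The topological support of a measure. -/
def measureSupport {E : Type*} [TopologicalSpace E] [MeasurableSpace E]
    (α : Measure E) : Set E :=
  {x | ∀ U : Set E, IsOpen U → x ∈ U → 0 < α U}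

/-- time weight -/
noncomputable def gkW (d : ℕ) (σ t : ℝ) : ℝ :=
  Real.exp (-t / σ ^ 2) * (2 * Real.pi * t) ^ (-(d : ℝ) / 2)

lemma gkW_pos (d : ℕ) (σ t : ℝ) (ht : 0 < t) : 0 < gkW d σ t := by
  unfold gkW; positivity

lemma gkW_meas (d : ℕ) (σ : ℝ) : Measurable (gkW d σ) := by
  unfold gkW; fun_prop

lemma gk_bound (d : ℕ) (c : ℝ) (hc : 0 < c) (t : ℝ) (ht : 0 < t) :
    (2 * Real.pi * t) ^ (-(d : ℝ) / 2) * Real.exp (-c / t)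
      ≤ 1 + ((2 * Real.pi * c)⁻¹) ^ d * d.factorial := by
  have hpi := Real.pi_pos
  set u : ℝ := (2 * Real.pi * t)⁻¹ with hu
  have hu0 : 0 < u := by positivity
  have h1 : (2 * Real.pi * t) ^ (-(d : ℝ) / 2) = u ^ ((d : ℝ) / 2) := by
    rw [neg_div, Real.rpow_neg (by positivity), hu, Real.inv_rpow (by positivity)]
  have h2 : u ^ ((d : ℝ) / 2) ≤ 1 + u ^ d := by
    rcases le_total u 1 with h | h
    · have := Real.rpow_le_one hu0.le h (show (0:ℝ) ≤ (d:ℝ)/2 by positivity)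
      have : 0 ≤ u ^ d := by positivity
      linarith
    · have h3 : u ^ ((d : ℝ) / 2) ≤ u ^ (d : ℝ) :=
        Real.rpow_le_rpow_of_exponent_le h (by
          have : (0:ℝ) ≤ d := by positivity
          linarith)
      rw [Real.rpow_natCast] at h3
      linarith
  have h3 : u = (2 * Real.pi * c)⁻¹ * (c / t) := by
    rw [hu]; field_simp
  have h4 := Real.pow_div_factorial_le_exp (c / t) (by positivity) d
  have hf : (0:ℝ) < d.factorial := by positivity
  rw [div_le_iff₀ hf] at h4
  have h5 : Real.exp (-c / t) = (Real.exp (c / t))⁻¹ := by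
    rw [neg_div, Real.exp_neg]
  have he : 1 ≤ Real.exp (c / t) := Real.one_le_exp (by positivity)
  rw [h1, h5, ← div_eq_mul_inv, div_le_iff₀ (by positivity)]
  calc u ^ ((d : ℝ) / 2) ≤ 1 + u ^ d := h2
    _ = 1 + ((2 * Real.pi * c)⁻¹) ^ d * (c / t) ^ d := by rw [h3, mul_pow]
    _ ≤ 1 * Real.exp (c / t)
        + ((2 * Real.pi * c)⁻¹) ^ d * (Real.exp (c / t) * d.factorial) := by
      gcongr
      linarith
    _ = _ := by ring

lemma gk_int (d : ℕ) (σ : ℝ) (hσ : 0 < σ) (c : ℝ) (hc : 0 < c) :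
    Integrable (fun t => gkW d σ t * Real.exp (-c / t)) (volume.restrict (Set.Ioi (0:ℝ))) := by
  have hi : IntegrableOn (fun t : ℝ => Real.exp (-(1 / σ ^ 2) * t)) (Set.Ioi 0) :=
    integrableOn_exp_mul_Ioi (by simp; positivity) 0
  refine (hi.mul_const (1 + ((2 * Real.pi * c)⁻¹) ^ d * d.factorial)).mono' ?_ ?_
  · exact ((gkW_meas d σ).mul (by fun_prop)).aestronglyMeasurable
  · filter_upwards [ae_restrict_mem measurableSet_Ioi] with t ht
    have ht : 0 < t := ht
    have := gkW_pos d σ t ht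
    rw [Real.norm_of_nonneg (by positivity)]
    unfold gkW
    rw [mul_assoc]
    have h := gk_bound d c hc t ht
    have : -t / σ ^ 2 = -(1 / σ ^ 2) * t := by ring
    rw [this]
    gcongr

lemma gk_ub (a u t : ℝ) (ha : 0 < a) (hu : a ≤ u) (ht : 0 < t) :
    Real.exp (-u ^ 2 / (2 * t)) ≤ Real.exp (-(a ^ 2 / 4) / t) ∧
    Real.exp (-u ^ 2 / (2 * t)) * t⁻¹ * u ≤ (4 / a) * Real.exp (-(a ^ 2 / 4) / t) := by
  have hu0 : 0 < u := by linarith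
  have hau : a ^ 2 ≤ u ^ 2 := by gcongr
  have e1 : Real.exp (-(u ^ 2 / 4) / t) ≤ Real.exp (-(a ^ 2 / 4) / t) := by
    gcongr
  have e2 : -u ^ 2 / (2 * t) = -(u ^ 2 / 4) / t + -(u ^ 2 / 4 / t) := by
    field_simp; ring
  have hs : 0 ≤ u ^ 2 / 4 / t := by positivity
  constructor
  · refine le_trans ?_ e1
    rw [Real.exp_le_exp, e2]; linarith
  · rw [e2, Real.exp_add, Real.exp_neg (u ^ 2 / 4 / t)]
    have h := Real.add_one_le_exp (u ^ 2 / 4 / t)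
    have h' : (Real.exp (u ^ 2 / 4 / t))⁻¹ * t⁻¹ * u ≤ 4 / a := by
      have : t⁻¹ * u ≤ 4 / a * (u ^ 2 / 4 / t) := by
        have : 4 / a * (u ^ 2 / 4 / t) = t⁻¹ * u * (u / a) := by field_simp
        rw [this]
        refine le_mul_of_one_le_right (by positivity) ?_
        rwa [one_le_div ha]
      rw [mul_assoc, inv_mul_le_iff₀ (by positivity)]
      calc _ ≤ _ := this
        _ ≤ 4 / a * Real.exp (u ^ 2 / 4 / t) := by gcongr; linarith
        _ = _ := by ring
    calc _ = Real.exp (-(u ^ 2 / 4) / t) * ((Real.exp (u ^ 2 / 4 / t))⁻¹ * t⁻¹ * u) := by ring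
      _ ≤ Real.exp (-(a ^ 2 / 4) / t) * (4 / a) := by gcongr
      _ = _ := by ring

lemma gk_deriv (d : ℕ) (σ t : ℝ) (x z : EuclideanSpace ℝ (Fin d)) :
    HasFDerivAt (fun z => gkW d σ t * Real.exp (-‖x - z‖ ^ 2 / (2 * t)))
      (innerSL ℝ ((gkW d σ t * Real.exp (-‖x - z‖ ^ 2 / (2 * t)) * t⁻¹) • (x - z))) z := by
  have h1 : HasFDerivAt (fun z => x - z) (-(ContinuousLinearMap.id ℝ (EuclideanSpace ℝ (Fin d)))) z :=
    (hasFDerivAt_id z).const_sub x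
  have h2 := ((h1.norm_sq.neg.mul_const (2 * t)⁻¹).exp).const_mul (gkW d σ t)
  simp only [← div_eq_mul_inv] at h2
  refine h2.congr_fderiv ?_
  ext v
  simp [inner_smul_left]
  ring

/-- Corollary 2.4: off the support of `α`, the function `h = ∫ G_{σ²}(x,·) α(dx)` is finite
and differentiable with `∇h(y) = ∫ ∇_y G_{σ²}(x,y) α(dx)`, and the backward drift
`b(y) = ∇ log h(y)` is the mean of `∇_y log G_{σ²}(x,y)` under the posterior
`(1/h(y)) G_{σ²}(x,y) α(dx)` (note `∇_y log G_{σ²}(x,y) · G_{σ²}(x,y) = ∇_y G_{σ²}(x,y)`). -/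
theorem stmt9 (d : ℕ) (hd : 3 ≤ d) (σ : ℝ) (hσ : 0 < σ)
    (α : Measure (EuclideanSpace ℝ (Fin d))) [IsProbabilityMeasure α]
    (y : EuclideanSpace ℝ (Fin d)) (hy : y ∉ measureSupport α) :
    Integrable (fun x => greenKernel d σ x y) α ∧
    Integrable (fun x => greenKernelGrad d σ x y) α ∧
    HasGradientAt (fun z => ∫ x, greenKernel d σ x z ∂α)
      (∫ x, greenKernelGrad d σ x y ∂α) y ∧
    HasGradientAt (fun z => Real.log (∫ x, greenKernel d σ x z ∂α))
      ((∫ x, greenKernel d σ x y ∂α)⁻¹ • ∫ x, greenKernelGrad d σ x y ∂α) y := by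
  classical
  set ν : Measure ℝ := volume.restrict (Set.Ioi (0:ℝ)) with hν
  set F : EuclideanSpace ℝ (Fin d) → EuclideanSpace ℝ (Fin d) × ℝ → ℝ :=
    fun z p => gkW d σ p.2 * Real.exp (-‖p.1 - z‖ ^ 2 / (2 * p.2)) with hF
  set V : EuclideanSpace ℝ (Fin d) → EuclideanSpace ℝ (Fin d) × ℝ → EuclideanSpace ℝ (Fin d) :=
    fun z p => (gkW d σ p.2 * Real.exp (-‖p.1 - z‖ ^ 2 / (2 * p.2)) * p.2⁻¹) • (p.1 - z) with hV
  have hFm : ∀ z, Measurable (F z) := fun z =>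
    ((gkW_meas d σ).comp measurable_snd).mul (by fun_prop)
  have hVm : ∀ z, Measurable (V z) := fun z =>
    ((hFm z).mul (by fun_prop)).smul (by fun_prop)
  have hG : ∀ x z, greenKernel d σ x z = (1 / σ ^ 2) * ∫ t, F z (x, t) ∂ν := fun x z => rfl
  have hGG : ∀ x z, greenKernelGrad d σ x z = (1 / σ ^ 2) • ∫ t, V z (x, t) ∂ν := fun x z => rfl
  obtain ⟨r, hr, hball⟩ : ∃ r > 0, α (Metric.ball y r) = 0 := by
    simp only [measureSupport, Set.mem_setOf_eq, not_forall, not_lt, nonpos_iff_eq_zero] at hy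
    obtain ⟨U, hU, hyU, h0⟩ := hy
    obtain ⟨r, hr, hs⟩ := Metric.isOpen_iff.1 hU y hyU
    exact ⟨r, hr, measure_mono_null hs h0⟩
  set a := r / 2 with ha
  have ha0 : 0 < a := by positivity
  set K : ℝ → ℝ := fun t => gkW d σ t * Real.exp (-(a ^ 2 / 4) / t) with hK
  have hKint : Integrable K ν := gk_int d σ hσ (a ^ 2 / 4) (by positivity)
  have hKp : Integrable (fun p : EuclideanSpace ℝ (Fin d) × ℝ => K p.2) (α.prod ν) :=
    hKint.comp_snd α
  have hae : ∀ᵐ p ∂(α.prod ν), p.1 ∉ Metric.ball y r ∧ 0 < p.2 := by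
    have e1 : ∀ᵐ x ∂α, x ∉ Metric.ball y r := measure_eq_zero_iff_ae_notMem.1 hball
    have e2 : ∀ᵐ t ∂ν, 0 < t := ae_restrict_mem measurableSet_Ioi
    exact (Measure.quasiMeasurePreserving_fst.ae e1).and (Measure.quasiMeasurePreserving_snd.ae e2)
  have hdist : ∀ x z, x ∉ Metric.ball y r → z ∈ Metric.ball y a → a ≤ ‖x - z‖ := by
    intro x z hx hz
    rw [Metric.mem_ball, not_lt] at hx
    rw [Metric.mem_ball] at hz
    have := dist_triangle x z y
    rw [← dist_eq_norm]
    linarith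
  have hFint : ∀ z ∈ Metric.ball y a, Integrable (F z) (α.prod ν) := by
    intro z hz
    refine hKp.mono' (hFm z).aestronglyMeasurable ?_
    filter_upwards [hae] with p hp
    have hw := gkW_pos d σ p.2 hp.2
    rw [Real.norm_of_nonneg (by positivity)]
    exact mul_le_mul_of_nonneg_left (gk_ub a _ _ ha0 (hdist _ _ hp.1 hz) hp.2).1 hw.le
  have hVb : ∀ᵐ p ∂(α.prod ν), ∀ z ∈ Metric.ball y a, ‖V z p‖ ≤ (4 / a) * K p.2 := by
    filter_upwards [hae] with p hp z hz
    have hw := gkW_pos d σ p.2 hp.2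
    have hp2 := hp.2
    have := mul_le_mul_of_nonneg_left (gk_ub a _ _ ha0 (hdist _ _ hp.1 hz) hp.2).2 hw.le
    rw [hV, norm_smul, Real.norm_of_nonneg (by positivity)]
    simp only [hK]
    linarith
  have hya : y ∈ Metric.ball y a := Metric.mem_ball_self ha0
  have hVint : Integrable (V y) (α.prod ν) := by
    refine (hKp.const_mul (4 / a)).mono' (hVm y).aestronglyMeasurable ?_
    filter_upwards [hVb] with p hp using hp y hya
  have hmain : HasFDerivAt (fun z => ∫ p, F z p ∂(α.prod ν))
      (∫ p, innerSL ℝ (V y p) ∂(α.prod ν)) y := by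
    refine hasFDerivAt_integral_of_dominated_of_fderiv_le (F := F)
      (F' := fun z p => innerSL ℝ (V z p)) (bound := fun p => (4 / a) * K p.2)
      (Metric.ball_mem_nhds y ha0)
      (Filter.Eventually.of_forall fun z => (hFm z).aestronglyMeasurable)
      (hFint y hya) ?_ ?_ (hKp.const_mul _) ?_
    · exact (innerSL ℝ).continuous.comp_aestronglyMeasurable (hVm y).aestronglyMeasurable
    · filter_upwards [hVb] with p hp z hz
      rw [innerSL_apply_norm]
      exact hp z hz
    · exact Filter.Eventually.of_forall fun p z _ => gk_deriv d σ p.2 p.1 z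
  have hhz : ∀ z ∈ Metric.ball y a,
      ∫ x, greenKernel d σ x z ∂α = (1 / σ ^ 2) * ∫ p, F z p ∂(α.prod ν) := by
    intro z hz
    simp only [hG]
    rw [integral_const_mul, integral_prod _ (hFint z hz)]
  have hgy : ∫ x, greenKernelGrad d σ x y ∂α = (1 / σ ^ 2) • ∫ p, V y p ∂(α.prod ν) := by
    simp only [hGG]
    rw [integral_smul, integral_prod _ hVint]
  have hgrad : HasGradientAt (fun z => ∫ x, greenKernel d σ x z ∂α)
      (∫ x, greenKernelGrad d σ x y ∂α) y := by
    rw [hasGradientAt_iff_hasFDerivAt]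
    have h1 := (hmain.const_mul (1 / σ ^ 2)).congr_of_eventuallyEq
      (f₁ := fun z => ∫ x, greenKernel d σ x z ∂α)
      (Filter.eventually_of_mem (Metric.ball_mem_nhds y ha0) hhz)
    refine h1.congr_fderiv ?_
    rw [ContinuousLinearMap.integral_comp_comm (innerSL ℝ) hVint, hgy]
    ext v
    simp
    exact Or.inl rfl
  have hpos : 0 < ∫ x, greenKernel d σ x y ∂α := by
    rw [hhz y hya]
    have hFpos : ∀ᵐ p ∂(α.prod ν), 0 < F y p := by
      filter_upwards [hae] with p hp
      have hw := gkW_pos d σ p.2 hp.2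
      simp only [hF]
      positivity
    have hFnn : 0 ≤ᵐ[α.prod ν] F y := hFpos.mono fun p hp => hp.le
    have h0 : 0 < ∫ p, F y p ∂(α.prod ν) := by
      refine lt_of_le_of_ne (integral_nonneg_of_ae hFnn) fun h => ?_
      have h2 := (integral_eq_zero_iff_of_nonneg_ae hFnn (hFint y hya)).1 h.symm
      have h3 : ∀ᵐ p ∂(α.prod ν), False := by
        filter_upwards [h2, hFpos] with p hp hp'
        simp only [Pi.zero_apply] at hp
        linarith
      rw [Filter.eventually_false_iff_eq_bot, ae_eq_bot] at h3
      have h4 : (α.prod ν) Set.univ = 0 := by rw [h3]; simp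
      rw [Measure.prod_apply MeasurableSet.univ] at h4
      simp [hν] at h4
    positivity
  refine ⟨?_, ?_, hgrad, ?_⟩
  · simp only [hG]
    exact (hFint y hya).integral_prod_left.const_mul _
  · simp only [hGG]
    exact hVint.integral_prod_left.smul (1 / σ ^ 2)
  · rw [hasGradientAt_iff_hasFDerivAt] at hgrad ⊢
    refine (hgrad.log hpos.ne').congr_fderiv ?_
    ext v
    simp [inner_smul_left]
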